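/- sum_{n=0}^∞ binom(2n,n)^3 / 64^n = π / Γ(3/4)^4. -/

import Mathlib

open Filter Topology Finset

/-- The `k`-th term of `₃F₂(x + 1/2, 1/2, 1/2; x + 1, x + 1; 1)`. -/
noncomputable def dixonTerm (x : ℝ) (k : ℕ) : ℝ :=
  ∏ j ∈ range k, (x + j + 1 / 2) * (j + 1 / 2) ^ 2 / ((j + 1) * (x + j + 1) ^ 2)

lemma dixonTerm_zero (x : ℝ) : dixonTerm x 0 = 1 := by simp [dixonTerm]

lemma dixonTerm_succ (x : ℝ) (k : ℕ) :
    dixonTerm x (k + 1) = dixonTerm x k *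
      ((x + k + 1 / 2) * (k + 1 / 2) ^ 2 / ((k + 1) * (x + k + 1) ^ 2)) := by
  rw [dixonTerm, dixonTerm, prod_range_succ]

lemma dixonTerm_nonneg {x : ℝ} (hx : 0 ≤ x) (k : ℕ) : 0 ≤ dixonTerm x k :=
  prod_nonneg fun _ _ => by positivity

lemma dixonTerm_le_dixonTerm_zero {x : ℝ} (hx : 0 ≤ x) (k : ℕ) :
    dixonTerm x k ≤ dixonTerm 0 k := by
  refine prod_le_prod (fun _ _ => by positivity) fun j _ => ?_
  have hj : (0 : ℝ) ≤ j := j.cast_nonneg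
  rw [div_le_div_iff₀ (by positivity) (by positivity)]
  have h : (x + j + 1 / 2) * (0 + j + 1) ^ 2 ≤ (0 + j + 1 / 2) * (x + j + 1) ^ 2 := by
    nlinarith [mul_nonneg hx hj, mul_nonneg hx (mul_nonneg hj hj), mul_nonneg hx (mul_nonneg hx hj)]
  calc (x + j + 1 / 2) * (j + 1 / 2) ^ 2 * ((j + 1) * (0 + j + 1) ^ 2)
      = ((j + 1 / 2) ^ 2 * (j + 1)) * ((x + j + 1 / 2) * (0 + j + 1) ^ 2) := by ring
    _ ≤ ((j + 1 / 2) ^ 2 * (j + 1)) * ((0 + j + 1 / 2) * (x + j + 1) ^ 2) := by gcongr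
    _ = _ := by ring

lemma dixonTerm_succ_le {x : ℝ} (hx : 0 ≤ x) (k : ℕ) : dixonTerm x (k + 1) ≤ 1 / (x + 1) := by
  induction k with
  | zero =>
    simp only [dixonTerm_succ, dixonTerm_zero, Nat.cast_zero]
    rw [one_mul, div_le_div_iff₀ (by positivity) (by positivity)]
    nlinarith
  | succ k ih =>
    rw [dixonTerm_succ]
    refine (mul_le_of_le_one_right (dixonTerm_nonneg hx _) ?_).trans ih
    have hj : (0 : ℝ) ≤ (k + 1 : ℕ) := Nat.cast_nonneg _
    generalize ((k + 1 : ℕ) : ℝ) = j at hj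
    rw [div_le_one (by positivity)]
    calc (x + j + 1 / 2) * (j + 1 / 2) ^ 2
        ≤ (x + j + 1) * ((j + 1) * (x + j + 1)) := by
          rw [sq]; gcongr <;> linarith
      _ = _ := by ring

lemma dixonTerm_add_two {x : ℝ} (hx : 0 ≤ x) (k : ℕ) :
    dixonTerm (x + 2) k = dixonTerm x k *
      ((x + 1 / 2 + k) * (x + 3 / 2 + k) / ((x + 1 / 2) * (x + 3 / 2)) *
        ((x + 1) * (x + 2) / ((x + 1 + k) * (x + 2 + k))) ^ 2) := by
  induction k with
  | zero => simp only [dixonTerm_zero, Nat.cast_zero, add_zero]; field_simp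
  | succ k ih =>
    rw [dixonTerm_succ, dixonTerm_succ, ih]
    push_cast
    have hj : (0 : ℝ) ≤ k := k.cast_nonneg
    field_simp
    ring

/-- The quotient of the sums of `dixonTerm x` and `dixonTerm (x + 2)`. -/
noncomputable def dixonRatio (x : ℝ) : ℝ := (x + 3 / 2) ^ 4 / ((x + 1) ^ 2 * (x + 2) ^ 2)

/-- The Wilf–Zeilberger mate of `dixonTerm`. -/
noncomputable def dixonMate (x : ℝ) (k : ℕ) : ℝ :=
  dixonTerm x k * (k * (k ^ 2 + (3 * (x + 1 / 2) + 1) * k + 2 * (x + 1 / 2) ^ 2 + x + 1 / 4) /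
    ((x + 1 / 2) * (x + 1 + k) ^ 2))

lemma dixonMate_succ_sub {x : ℝ} (hx : 0 ≤ x) (k : ℕ) :
    dixonMate x (k + 1) - dixonMate x k =
      dixonRatio x * dixonTerm (x + 2) k - dixonTerm x k := by
  rw [dixonMate, dixonMate, dixonTerm_add_two hx, dixonTerm_succ, dixonRatio]
  push_cast
  have hj : (0 : ℝ) ≤ k := k.cast_nonneg
  generalize (k : ℝ) = j at hj
  field_simp
  ring

lemma sum_range_dixonTerm {x : ℝ} (hx : 0 ≤ x) (n : ℕ) :
    ∑ k ∈ range n, (dixonRatio x * dixonTerm (x + 2) k - dixonTerm x k) = dixonMate x n := by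
  simp_rw [← dixonMate_succ_sub hx]
  rw [sum_range_sub]
  simp [dixonMate]

lemma dixonTerm_zero_eq_centralBinom (k : ℕ) :
    dixonTerm 0 k = ((k.centralBinom : ℝ) / 4 ^ k) ^ 3 := by
  induction k with
  | zero => simp [dixonTerm_zero]
  | succ k ih =>
    have h : ((k + 1 : ℕ) : ℝ) * (k + 1).centralBinom = 2 * (2 * k + 1) * k.centralBinom := by
      exact_mod_cast k.succ_mul_centralBinom_succ
    have h' : ((k + 1).centralBinom : ℝ) = 2 * (2 * k + 1) * k.centralBinom / (k + 1) := by
      push_cast at h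
      rw [← h]
      field_simp
    rw [dixonTerm_succ, ih, h']
    field_simp
    ring

lemma centralBinom_div_four_pow_sq_le (k : ℕ) :
    ((k.centralBinom : ℝ) / 4 ^ k) ^ 2 ≤ 1 / (2 * k + 1) := by
  induction k with
  | zero => simp
  | succ k ih =>
    have h : ((k + 1 : ℕ) : ℝ) * (k + 1).centralBinom = 2 * (2 * k + 1) * k.centralBinom := by
      exact_mod_cast k.succ_mul_centralBinom_succ
    have h' : ((k + 1).centralBinom : ℝ) / 4 ^ (k + 1) =
        k.centralBinom / 4 ^ k * ((2 * k + 1) / (2 * k + 2)) := by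
      push_cast at h
      field_simp
      linear_combination 2 * 4 ^ k * h
    rw [h', mul_pow]
    calc _ ≤ 1 / (2 * (k : ℝ) + 1) * ((2 * k + 1) / (2 * k + 2)) ^ 2 := by gcongr
      _ ≤ _ := by
        rw [div_pow, div_mul_div_comm, div_le_div_iff₀ (by positivity) (by positivity)]
        push_cast
        have hj : (0 : ℝ) ≤ k := k.cast_nonneg
        nlinarith [mul_nonneg hj hj]

lemma centralBinom_div_four_pow_le (k : ℕ) :
    (k.centralBinom : ℝ) / 4 ^ k ≤ ((k : ℝ) + 1) ^ (-(1 / 2) : ℝ) := by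
  have hk : (0 : ℝ) < k + 1 := by positivity
  refine le_of_sq_le_sq ?_ (by positivity)
  rw [← Real.rpow_mul_natCast hk.le]
  norm_num
  rw [Real.rpow_neg_one, ← one_div]
  refine (centralBinom_div_four_pow_sq_le k).trans ?_
  gcongr
  linarith

lemma summable_dixonTerm_zero : Summable (dixonTerm 0) := by
  have h : Summable fun k : ℕ => ((k + 1 : ℕ) : ℝ) ^ (-(3 / 2) : ℝ) :=
    (summable_nat_add_iff 1).2 (Real.summable_nat_rpow.2 (by norm_num))
  refine h.of_nonneg_of_le (dixonTerm_nonneg le_rfl) fun k => ?_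
  have hk : (0 : ℝ) < k + 1 := by positivity
  rw [dixonTerm_zero_eq_centralBinom]
  refine (pow_le_pow_left₀ (by positivity) (centralBinom_div_four_pow_le k) 3).trans_eq ?_
  rw [← Real.rpow_mul_natCast hk.le]
  push_cast
  norm_num

lemma summable_dixonTerm {x : ℝ} (hx : 0 ≤ x) : Summable (dixonTerm x) :=
  summable_dixonTerm_zero.of_nonneg_of_le (dixonTerm_nonneg hx) (dixonTerm_le_dixonTerm_zero hx)

lemma dixonMate_nonneg {x : ℝ} (hx : 0 ≤ x) (k : ℕ) : 0 ≤ dixonMate x k :=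
  mul_nonneg (dixonTerm_nonneg hx k) (by positivity)

lemma dixonMate_le {x : ℝ} (hx : 0 ≤ x) (k : ℕ) :
    dixonMate x k ≤ 3 * ((k.centralBinom : ℝ) / 4 ^ k) := by
  have hk : (0 : ℝ) ≤ k := k.cast_nonneg
  have hc := centralBinom_div_four_pow_sq_le k
  have ht := dixonTerm_le_dixonTerm_zero hx k
  rw [dixonTerm_zero_eq_centralBinom] at ht
  have hb : (0 : ℝ) ≤ (k.centralBinom : ℝ) / 4 ^ k := by positivity
  generalize (k.centralBinom : ℝ) / 4 ^ k = b at *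
  have hr : (k : ℝ) * (k ^ 2 + (3 * (x + 1 / 2) + 1) * k + 2 * (x + 1 / 2) ^ 2 + x + 1 / 4) /
      ((x + 1 / 2) * (x + 1 + k) ^ 2) ≤ 6 * k := by
    rw [div_le_iff₀ (by positivity)]
    have h : (k : ℝ) ^ 2 + (3 * (x + 1 / 2) + 1) * k + 2 * (x + 1 / 2) ^ 2 + x + 1 / 4 ≤
        (6 * (x + 1 / 2)) * (x + 1 + k) ^ 2 := by
      calc _ ≤ 3 * (x + 1 + k) ^ 2 := by nlinarith [mul_nonneg hx hk]
        _ ≤ _ := by gcongr; linarith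
    calc _ ≤ (k : ℝ) * ((6 * (x + 1 / 2)) * (x + 1 + k) ^ 2) := by gcongr
      _ = _ := by ring
  calc dixonMate x k ≤ b ^ 3 * (6 * k) := by
        exact mul_le_mul ht hr (by positivity) (by positivity)
    _ = 6 * k * b * b ^ 2 := by ring
    _ ≤ 6 * k * b * (1 / (2 * k + 1)) := by gcongr
    _ ≤ 3 * b := by
        rw [mul_one_div, div_le_iff₀ (by positivity)]
        nlinarith

lemma tendsto_dixonMate {x : ℝ} (hx : 0 ≤ x) : Tendsto (dixonMate x) atTop (𝓝 0) := by
  have h : Tendsto (fun k : ℕ => ((k + 1 : ℕ) : ℝ) ^ (-(1 / 2) : ℝ)) atTop (𝓝 0) :=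
    (tendsto_rpow_neg_atTop (by norm_num)).comp
      (tendsto_natCast_atTop_atTop.comp (tendsto_add_atTop_nat 1))
  refine squeeze_zero (dixonMate_nonneg hx) (fun k => (dixonMate_le hx k).trans ?_)
    (by simpa using h.const_mul 3)
  have := centralBinom_div_four_pow_le k
  gcongr
  norm_num at this ⊢
  exact this

lemma tsum_dixonTerm_eq {x : ℝ} (hx : 0 ≤ x) :
    ∑' k, dixonTerm x k = dixonRatio x * ∑' k, dixonTerm (x + 2) k := by
  have h := (((summable_dixonTerm (x := x + 2) (by positivity)).hasSum.mul_left
    (dixonRatio x)).sub (summable_dixonTerm hx).hasSum).tendsto_sum_nat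
  simp_rw [sum_range_dixonTerm hx] at h
  linarith [tendsto_nhds_unique h (tendsto_dixonMate hx)]

lemma tsum_dixonTerm_zero_eq (n : ℕ) :
    ∑' k, dixonTerm 0 k =
      (∏ j ∈ range n, dixonRatio (2 * j)) * ∑' k, dixonTerm (2 * n) k := by
  induction n with
  | zero => simp
  | succ n ih =>
    rw [ih, prod_range_succ, tsum_dixonTerm_eq (x := 2 * n) (by positivity), mul_assoc]
    push_cast
    ring_nf

lemma tendsto_tsum_dixonTerm :
    Tendsto (fun n : ℕ => ∑' k, dixonTerm (2 * n) k) atTop (𝓝 1) := by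
  have h := tendsto_tsum_of_dominated_convergence (𝓕 := atTop)
    (f := fun (n : ℕ) k => dixonTerm (2 * n) k) (g := fun k : ℕ => if k = 0 then (1 : ℝ) else 0)
    summable_dixonTerm_zero ?_ ?_
  · simpa using h
  · rintro (_ | k)
    · simp [dixonTerm_zero]
    · have h0 : Tendsto (fun n : ℕ => 1 / ((n : ℝ) + 1)) atTop (𝓝 0) :=
        tendsto_one_div_add_atTop_nhds_zero_nat
      refine squeeze_zero (fun n => dixonTerm_nonneg (by positivity) _) (fun n => ?_)
        (by simpa using h0)
      refine (dixonTerm_succ_le (by positivity) k).trans ?_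
      rw [← one_div]
      gcongr
      linarith [(n.cast_nonneg : (0 : ℝ) ≤ n)]
  · refine .of_forall fun n k => ?_
    rw [Real.norm_of_nonneg (dixonTerm_nonneg (by positivity) _)]
    exact dixonTerm_le_dixonTerm_zero (by positivity) k

lemma prod_dixonRatio_eq_GammaSeq {n : ℕ} (hn : n ≠ 0) :
    ∏ j ∈ range (n + 1), dixonRatio (2 * j) =
      (Real.GammaSeq (1 / 2) n * Real.GammaSeq 1 n / Real.GammaSeq (3 / 4) n ^ 2) ^ 2 := by
  have hn' : (0 : ℝ) < n := by positivity
  have hpow : (n : ℝ) ^ (1 / 2 : ℝ) * (n : ℝ) ^ (1 : ℝ) = ((n : ℝ) ^ (3 / 4 : ℝ)) ^ 2 := by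
    rw [← Real.rpow_add hn', ← Real.rpow_mul_natCast hn'.le]
    norm_num
  have hpos (s : ℝ) (hs : 0 < s) : (∏ j ∈ range (n + 1), (s + j)) ≠ 0 :=
    prod_ne_zero_iff.2 fun _ _ => by positivity
  have hfac : ∏ j ∈ range (n + 1), dixonRatio (2 * j) =
      ((∏ j ∈ range (n + 1), ((3 / 4 : ℝ) + j)) ^ 2 /
        ((∏ j ∈ range (n + 1), ((1 / 2 : ℝ) + j)) * ∏ j ∈ range (n + 1), ((1 : ℝ) + j))) ^ 2 := by
    rw [← prod_mul_distrib, ← prod_pow, ← prod_div_distrib, ← prod_pow]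
    refine prod_congr rfl fun j _ => ?_
    rw [dixonRatio]
    field_simp
    ring
  rw [hfac]
  unfold Real.GammaSeq
  have h1 := hpos (1 / 2) (by norm_num)
  have h2 := hpos 1 (by norm_num)
  have h3 := hpos (3 / 4) (by norm_num)
  have h4 : (n : ℝ) ^ (3 / 4 : ℝ) ≠ 0 := by positivity
  have h5 : (n.factorial : ℝ) ≠ 0 := by positivity
  congr 1
  generalize (n : ℝ) ^ (3 / 4 : ℝ) = u at *
  generalize (n : ℝ) ^ (1 / 2 : ℝ) = v at *
  generalize (n : ℝ) ^ (1 : ℝ) = w at *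
  generalize (∏ j ∈ range (n + 1), ((3 / 4 : ℝ) + j)) = p at *
  generalize (∏ j ∈ range (n + 1), ((1 / 2 : ℝ) + j)) = q at *
  generalize (∏ j ∈ range (n + 1), ((1 : ℝ) + j)) = r at *
  field_simp
  linear_combination -hpow

lemma tendsto_prod_dixonRatio :
    Tendsto (fun n : ℕ => ∏ j ∈ range (n + 1), dixonRatio (2 * j)) atTop
      (𝓝 (Real.pi / Real.Gamma (3 / 4) ^ 4)) := by
  have hG : Real.Gamma (3 / 4) ≠ 0 := (Real.Gamma_pos_of_pos (by norm_num)).ne'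
  have h := ((((Real.GammaSeq_tendsto_Gamma (1 / 2)).mul (Real.GammaSeq_tendsto_Gamma 1)).div
    ((Real.GammaSeq_tendsto_Gamma (3 / 4)).pow 2) (pow_ne_zero 2 hG)).pow 2)
  rw [Real.Gamma_one, mul_one, Real.Gamma_one_half_eq, div_pow, Real.sq_sqrt Real.pi_pos.le,
    ← pow_mul] at h
  refine h.congr' ?_
  filter_upwards [eventually_ne_atTop 0] with n hn
  exact (prod_dixonRatio_eq_GammaSeq hn).symm

/-- Ramanujan: `∑ binom(2n,n)³/64ⁿ = π/Γ(3/4)⁴`. -/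
theorem sum_centralBinom_cube_div_64_pow :
    ∑' n : ℕ, ((2 * n).choose n : ℝ) ^ 3 / 64 ^ n = Real.pi / (Real.Gamma (3 / 4)) ^ 4 := by
  have hterm (n : ℕ) : ((2 * n).choose n : ℝ) ^ 3 / 64 ^ n = dixonTerm 0 n := by
    rw [dixonTerm_zero_eq_centralBinom, Nat.centralBinom_eq_two_mul_choose, div_pow, ← pow_mul,
      mul_comm n 3, pow_mul]
    norm_num
  simp_rw [hterm]
  have h := tendsto_prod_dixonRatio.mul ((tendsto_add_atTop_iff_nat 1).2 tendsto_tsum_dixonTerm)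
  simp_rw [← tsum_dixonTerm_zero_eq, mul_one] at h
  exact tendsto_nhds_unique tendsto_const_nhds h
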